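/- arXiv:0908.0107 — 3 statements merged into one kernel-verified Lean document; each statement's English description precedes it below -/
import Mathlib

section
/- Let R be a commutative Noetherian local ring and M a finitely generated R-module. Let x_1, ..., x_n be a sequence that is both an R-sequence and an M-sequence, contained in the intersection of the annihilators of Ext^i_R(M, Ω^j M) for all 1 ≤ i, j ≤ n. Then Ω^n_R(M/(x_1,...,x_n)M) is isomorphic to the direct sum over i = 0, ..., n of (Ω^i M)^(binomial(n,i)). -/
open CategoryTheory IsLocalRing

noncomputable section

variable (R : Type) [CommRing R] [IsLocalRing R]

/-- `K` is (isomorphic to) the first syzygy of `M`, i.e. the kernel of a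
minimal free cover of `M`. -/
def IsSyzygyOf (K M : ModuleCat.{0} R) : Prop :=
  ∃ (n : ℕ) (f : (Fin n → R) →ₗ[R] M),
    Function.Surjective f ∧
    LinearMap.ker f ≤ (maximalIdeal R) • (⊤ : Submodule R (Fin n → R)) ∧
    Nonempty (K ≃ₗ[R] LinearMap.ker f)

/-- `K` is (isomorphic to) the `n`-th syzygy of `M` with respect to a minimal
free resolution. -/
def IsNthSyzygyOf : ℕ → ModuleCat.{0} R → ModuleCat.{0} R → Prop
  | 0, K, M => Nonempty (K ≃ₗ[R] M)
  | n + 1, K, M => ∃ K' : ModuleCat.{0} R, IsSyzygyOf R K' M ∧ IsNthSyzygyOf n K K'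

/-!
Let `f : F → L` be a minimal free cover of an `n`-th syzygy `L` of `N`, with kernel `ΩL`, and let
`x ∈ 𝔪` be a nonzerodivisor on `N`. The pullback `P` of `f` along `x : L → L` is an `(n + 1)`-st
syzygy of `N / xN`: for `n = 0` it is `f⁻¹(xN)`, the kernel of `F → N / xN`, and minimal covers of
a module and of its syzygy combine to a minimal cover of the pullback whose kernel is again a
pullback. The projection `P → L` has kernel `ΩL`, and it splits as soon as `x : L → L` factors
through `f`. When `L` is a direct sum of modules `Ωᵏ M` it does so on each summand, because `x`
kills `Ext¹(Ωᵏ M, Ωᵏ⁺¹ M) ≅ Extᵏ⁺¹(M, Ωᵏ⁺¹ M)`. Hence each element of the sequence turns a summand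
`Ωᵏ M` of the syzygy into `Ωᵏ⁺¹ M ⊕ Ωᵏ M`, and the binomial coefficients come from Pascal's rule.
-/

section DimensionShift

open Limits

variable {C : Type*} [Category* C] [Abelian C]

/-- The augmentation `P₀ → Z` of a projective resolution, that is `P.π.f 0` with its codomain
identified with `Z`. -/
def augmentation {Z : C} (P : ProjectiveResolution Z) : P.complex.X 0 ⟶ Z := P.π.f 0

instance {Z : C} (P : ProjectiveResolution Z) : Epi (augmentation P) :=
  inferInstanceAs (Epi (P.π.f 0))

lemma d_comp_augmentation {Z : C} (P : ProjectiveResolution Z) :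
    P.complex.d 1 0 ≫ augmentation P = 0 :=
  P.complex_d_comp_π_f_zero

lemma exact_augmentation {Z : C} (P : ProjectiveResolution Z) :
    (ShortComplex.mk _ _ (d_comp_augmentation P)).Exact :=
  P.exact₀

variable {S : ShortComplex C}

lemma d_comp_augmentation_comp (P : ProjectiveResolution S.X₁) :
    P.complex.d 1 0 ≫ augmentation P ≫ S.f = 0 := by
  rw [← Category.assoc, d_comp_augmentation, zero_comp]

lemma augmentation_comp_comp (P : ProjectiveResolution S.X₁) :
    (augmentation P ≫ S.f) ≫ S.g = 0 := by
  rw [Category.assoc, S.zero, comp_zero]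

/-- The complex `⋯ → P₁ → P₀ → S.X₂` obtained by splicing a resolution `P` of `S.X₁` with
`S.X₁ → S.X₂`. -/
abbrev splicedComplex (P : ProjectiveResolution S.X₁) : ChainComplex C ℕ :=
  P.complex.augment (augmentation P ≫ S.f) (d_comp_augmentation_comp P)

lemma splicedComplex_d_comp (P : ProjectiveResolution S.X₁) :
    (splicedComplex P).d 1 0 ≫ S.g = 0 :=
  augmentation_comp_comp P

lemma splicedComplex_exactAt_succ (hS : S.ShortExact) (P : ProjectiveResolution S.X₁) (n : ℕ) :
    (splicedComplex P).ExactAt (n + 1) := by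
  rw [HomologicalComplex.exactAt_iff' _ (n + 2) (n + 1) n (by simp) (by simp)]
  cases n with
  | zero =>
    let φ : ShortComplex.mk _ _ (d_comp_augmentation P) ⟶
        ShortComplex.mk _ _ (d_comp_augmentation_comp P) :=
      { τ₁ := 𝟙 _, τ₂ := 𝟙 _, τ₃ := S.f }
    have : Epi φ.τ₁ := inferInstanceAs (Epi (𝟙 _))
    have : IsIso φ.τ₂ := inferInstanceAs (IsIso (𝟙 _))
    have : Mono φ.τ₃ := hS.mono_f
    exact (ShortComplex.exact_iff_of_epi_of_isIso_of_mono φ).1 (exact_augmentation P)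
  | succ n => exact P.exact_succ n

lemma exact_augmentation_comp (hS : S.ShortExact) (P : ProjectiveResolution S.X₁) :
    (ShortComplex.mk _ _ (augmentation_comp_comp P)).Exact := by
  let φ : ShortComplex.mk _ _ (augmentation_comp_comp P) ⟶ S :=
    { τ₁ := augmentation P, τ₂ := 𝟙 _, τ₃ := 𝟙 _ }
  have : Epi φ.τ₁ := inferInstanceAs (Epi (augmentation P))
  have : IsIso φ.τ₂ := inferInstanceAs (IsIso (𝟙 _))
  have : Mono φ.τ₃ := inferInstanceAs (Mono (𝟙 _))
  exact (ShortComplex.exact_iff_of_epi_of_isIso_of_mono φ).2 hS.exact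

/-- The projective resolution of `S.X₃` obtained by splicing one of `S.X₁` with a short exact
sequence `S` whose middle term is projective. -/
def spliceResolution (hS : S.ShortExact) [Projective S.X₂]
    (P : ProjectiveResolution S.X₁) : ProjectiveResolution S.X₃ where
  complex := splicedComplex P
  projective
    | 0 => ‹Projective S.X₂›
    | n + 1 => P.projective n
  π := (ChainComplex.toSingle₀Equiv _ _).symm ⟨S.g, splicedComplex_d_comp P⟩
  quasiIso := ⟨fun n => by
    cases n with
    | zero =>
      rw [ChainComplex.quasiIsoAt₀_iff, ShortComplex.quasiIso_iff_of_zeros' _ rfl rfl rfl]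
      have hπ : (((splicedComplex P).toSingle₀Equiv _).symm ⟨S.g, splicedComplex_d_comp P⟩).f 0 =
          S.g :=
        ChainComplex.toSingle₀Equiv_symm_apply_f_zero (C := splicedComplex P) S.g
          (splicedComplex_d_comp P)
      refine (ShortComplex.exact_and_epi_g_iff_of_iso ?_).2
        ⟨exact_augmentation_comp hS P, hS.epi_g⟩
      refine ShortComplex.isoMk (Iso.refl _) (Iso.refl _) (Iso.refl _) ?_ ?_
      · exact (Category.id_comp _).trans (Category.comp_id _).symm
      · exact (Category.id_comp S.g).trans (hπ.symm.trans (Category.comp_id _).symm)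
    | succ n =>
      rw [quasiIsoAt_iff_exactAt']
      · exact splicedComplex_exactAt_succ hS P n
      · exact ChainComplex.exactAt_succ_single_obj _ _⟩

variable {R : Type*} [CommRing R] [Linear R C] [EnoughProjectives C]

/-- Dimension shifting along a short exact sequence with projective middle term. -/
def extSuccIso (hS : S.ShortExact) [Projective S.X₂] (n : ℕ) (W : C) :
    ((Ext R C (n + 2)).obj (Opposite.op S.X₃)).obj W ≅
      ((Ext R C (n + 1)).obj (Opposite.op S.X₁)).obj W :=
  let P := projectiveResolution S.X₁
  (spliceResolution hS P).isoExt (n + 2) W ≪≫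
    ShortComplex.homologyMapIso
      (HomologicalComplex.isoSc' _ (n + 1) (n + 2) (n + 3) (by simp) (by simp)) ≪≫
    (ShortComplex.homologyMapIso
      (HomologicalComplex.isoSc' (P.complex.linearYonedaObj R W) n (n + 1) (n + 2)
        (by simp) (by simp))).symm ≪≫
    (P.isoExt (n + 1) W).symm

lemma exists_d_comp_eq_smul {Z W : C} (P : ProjectiveResolution Z) (n : ℕ) {x : R}
    (hx : ∀ e : ((Ext R C (n + 1)).obj (Opposite.op Z)).obj W, x • e = 0)
    (c : P.complex.X (n + 1) ⟶ W) (hc : P.complex.d (n + 2) (n + 1) ≫ c = 0) :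
    ∃ g : P.complex.X n ⟶ W, P.complex.d (n + 1) n ≫ g = x • c := by
  let D := P.complex.linearYonedaObj R W
  let T := D.sc' n (n + 1) (n + 2)
  let φ := (P.isoExt (R := R) (n + 1) W ≪≫
    ShortComplex.homologyMapIso (D.isoSc' n (n + 1) (n + 2) (by simp) (by simp)) ≪≫
    T.moduleCatHomologyIso).toLinearEquiv
  have hφ (e : T.moduleCatLeftHomologyData.H) : x • e = 0 := by
    rw [← φ.apply_symm_apply e, ← map_smul, hx, map_zero]
  let z : LinearMap.ker T.g.hom := ⟨c, hc⟩
  have hz : (Submodule.Quotient.mk (x • z) :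
      LinearMap.ker T.g.hom ⧸ LinearMap.range T.moduleCatToCycles) = 0 :=
    hφ (Submodule.Quotient.mk z)
  obtain ⟨g, hg⟩ := (Submodule.Quotient.mk_eq_zero _).1 hz
  exact ⟨g, congrArg Subtype.val hg⟩

lemma exists_extension_smul_id (hS : S.ShortExact) [Projective S.X₂] {x : R}
    (hx : ∀ e : ((Ext R C 1).obj (Opposite.op S.X₃)).obj S.X₁, x • e = 0) :
    ∃ g : S.X₂ ⟶ S.X₁, S.f ≫ g = x • 𝟙 S.X₁ := by
  let P := projectiveResolution S.X₁
  obtain ⟨g, hg⟩ : ∃ g : S.X₂ ⟶ S.X₁, (augmentation P ≫ S.f) ≫ g = x • augmentation P :=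
    exists_d_comp_eq_smul (spliceResolution hS P) 0 hx (augmentation P) (d_comp_augmentation P)
  refine ⟨g, (cancel_epi (augmentation P)).1 ?_⟩
  rw [Linear.comp_smul, Category.comp_id, ← hg, Category.assoc]

lemma exists_comp_eq_smul_id (hS : S.ShortExact) [Projective S.X₂] {x : R}
    (hx : ∀ e : ((Ext R C 1).obj (Opposite.op S.X₃)).obj S.X₁, x • e = 0) :
    ∃ s : S.X₃ ⟶ S.X₂, s ≫ S.g = x • 𝟙 S.X₃ := by
  obtain ⟨g, hg⟩ := exists_extension_smul_id hS hx
  have := hS.epi_g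
  have hzero : S.f ≫ (x • 𝟙 S.X₂ - g ≫ S.f) = 0 := by
    rw [Preadditive.comp_sub, ← Category.assoc, hg]; simp
  refine ⟨hS.exact.desc _ hzero, (cancel_epi S.g).1 ?_⟩
  rw [← Category.assoc, hS.exact.g_desc]
  simp

end DimensionShift

section MinimalShortExact

variable {R : Type*} [CommRing R] [IsLocalRing R]
  {A A' F G K K' : Type*} [AddCommGroup A] [Module R A] [AddCommGroup A'] [Module R A']
  [AddCommGroup F] [Module R F] [AddCommGroup G] [Module R G]
  [AddCommGroup K] [Module R K] [AddCommGroup K'] [Module R K']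

/-- A short exact sequence `0 → K → F → A → 0` with `K` mapping into `𝔪F`. For `F` finite free
this exhibits `K` as the first syzygy of `A`; keeping the inclusion `i` as data avoids working
with kernels as submodules. -/
structure IsMinimalShortExact (i : K →ₗ[R] F) (f : F →ₗ[R] A) : Prop where
  injective : Function.Injective i
  exact : Function.Exact i f
  surjective : Function.Surjective f
  mem_smul_top : ∀ k, i k ∈ maximalIdeal R • (⊤ : Submodule R F)

namespace IsMinimalShortExact

variable {i : K →ₗ[R] F} {f : F →ₗ[R] A} {j : K' →ₗ[R] G} {g : G →ₗ[R] A}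

lemma ker_le (h : IsMinimalShortExact i f) :
    LinearMap.ker f ≤ maximalIdeal R • (⊤ : Submodule R F) := by
  intro z hz
  obtain ⟨k, rfl⟩ := (h.exact z).1 hz
  exact h.mem_smul_top k

lemma of_ker_subtype (hf : Function.Surjective f)
    (hker : LinearMap.ker f ≤ maximalIdeal R • (⊤ : Submodule R F)) :
    IsMinimalShortExact (LinearMap.ker f).subtype f where
  injective := Subtype.val_injective
  exact := f.exact_subtype_ker_map
  surjective := hf
  mem_smul_top k := hker k.2

/-- The first term of the sequence as the kernel of its cover. -/
def kerEquiv (h : IsMinimalShortExact i f) : K ≃ₗ[R] LinearMap.ker f :=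
  LinearEquiv.ofInjective i h.injective ≪≫ₗ LinearEquiv.ofEq _ _ h.exact.linearMap_ker_eq.symm

lemma comp_equiv (h : IsMinimalShortExact i f) (eK : K' ≃ₗ[R] K) (eF : F ≃ₗ[R] G)
    (eA : A ≃ₗ[R] A') :
    IsMinimalShortExact (eF.toLinearMap ∘ₗ i ∘ₗ eK.toLinearMap)
      (eA.toLinearMap ∘ₗ f ∘ₗ eF.symm.toLinearMap) where
  injective := eF.injective.comp (h.injective.comp eK.injective)
  exact z := by
    obtain ⟨z, rfl⟩ := eF.surjective z
    simpa [eK.surjective.exists] using (h.exact z).trans (eK.surjective.exists)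
  surjective := eA.surjective.comp (h.surjective.comp eF.symm.surjective)
  mem_smul_top k :=
    Submodule.smul_top_le_comap_smul_top _ eF.toLinearMap (h.mem_smul_top (eK k))

lemma pi {ι : Type*} [Finite ι] {A F K : ι → Type*}
    [∀ a, AddCommGroup (A a)] [∀ a, Module R (A a)] [∀ a, AddCommGroup (F a)]
    [∀ a, Module R (F a)] [∀ a, AddCommGroup (K a)] [∀ a, Module R (K a)]
    {i : ∀ a, K a →ₗ[R] F a} {f : ∀ a, F a →ₗ[R] A a}
    (h : ∀ a, IsMinimalShortExact (i a) (f a)) :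
    IsMinimalShortExact (LinearMap.piMap i) (LinearMap.piMap f) where
  injective _ _ hk := funext fun a => (h a).injective (congrFun hk a)
  exact z := by
    refine funext_iff.trans <| (forall_congr' fun a => (h a).exact (z a)).trans ?_
    exact Classical.skolem.trans (exists_congr fun _ => funext_iff.symm)
  surjective y := by
    choose z hz using fun a => (h a).surjective (y a)
    exact ⟨z, funext hz⟩
  mem_smul_top k := by
    classical
    have := Fintype.ofFinite ι
    rw [← Finset.univ_sum_single (LinearMap.piMap i k)]
    exact Submodule.sum_mem _ fun a _ => Submodule.smul_top_le_comap_smul_top _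
      (LinearMap.single R F a) ((h a).mem_smul_top (k a))

/-- Nakayama's lemma: `G` is the image of `φ` plus `ker g ⊆ 𝔪G`. -/
lemma surjective_of_comp_eq [Module.Finite R G] (h : IsMinimalShortExact j g)
    (hf : Function.Surjective f) {φ : F →ₗ[R] G} (hφ : g ∘ₗ φ = f) : Function.Surjective φ := by
  rw [← LinearMap.range_eq_top, eq_top_iff]
  refine Submodule.le_of_le_smul_of_le_jacobson_bot (I := maximalIdeal R) Module.Finite.fg_top
    (maximalIdeal_le_jacobson _) fun y _ => ?_
  obtain ⟨z, hz⟩ := hf (g y)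
  have hy : y - φ z ∈ LinearMap.ker g := by
    rw [LinearMap.mem_ker, map_sub, ← hz, ← hφ, LinearMap.comp_apply, sub_self]
  rw [← add_sub_cancel (φ z) y]
  exact Submodule.add_mem_sup ⟨z, rfl⟩ (h.ker_le hy)

lemma bijective_of_comp_eq [Module.Finite R F] [Module.Finite R G] [Module.Projective R G]
    (hf : IsMinimalShortExact i f) (hg : IsMinimalShortExact j g) {φ : F →ₗ[R] G}
    (hφ : g ∘ₗ φ = f) : Function.Bijective φ := by
  obtain ⟨ψ, hψ⟩ := Module.projective_lifting_property f g hf.surjective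
  have hφ_surj : Function.Surjective φ := hg.surjective_of_comp_eq hf.surjective hφ
  have hψ_surj : Function.Surjective ψ := hf.surjective_of_comp_eq hg.surjective hψ
  have hψφ : Function.Injective (ψ ∘ φ) :=
    OrzechProperty.injective_of_surjective_endomorphism (ψ ∘ₗ φ) (hψ_surj.comp hφ_surj)
  exact ⟨hψφ.of_comp, hφ_surj⟩

theorem nonempty_equiv [Module.Finite R F] [Module.Projective R F] [Module.Finite R G]
    [Module.Projective R G] (hf : IsMinimalShortExact i f) (hg : IsMinimalShortExact j g) :
    Nonempty (K ≃ₗ[R] K') := by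
  obtain ⟨φ, hφ⟩ := Module.projective_lifting_property g f hg.surjective
  let e := LinearEquiv.ofBijective φ (hf.bijective_of_comp_eq hg hφ)
  have hker : (LinearMap.ker f).map e.toLinearMap = LinearMap.ker g := by
    rw [← hφ, LinearMap.ker_comp]
    exact Submodule.map_comap_eq_of_surjective e.surjective _
  exact ⟨hf.kerEquiv ≪≫ₗ e.ofSubmodules _ _ hker ≪≫ₗ hg.kerEquiv.symm⟩

end IsMinimalShortExact

end MinimalShortExact

section Syzygy

variable {R}

lemma IsMinimalShortExact.isSyzygyOf {K F A : Type} [AddCommGroup K] [Module R K]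
    [AddCommGroup F] [Module R F] [Module.Free R F] [Module.Finite R F] [AddCommGroup A]
    [Module R A] {i : K →ₗ[R] F} {f : F →ₗ[R] A} (h : IsMinimalShortExact i f) :
    IsSyzygyOf R (ModuleCat.of R K) (ModuleCat.of R A) :=
  have h' := h.comp_equiv (.refl R K) (Module.finBasis R F).equivFun (.refl R A)
  ⟨_, _, h'.surjective, h'.ker_le, ⟨h'.kerEquiv⟩⟩

namespace IsSyzygyOf

variable {K K' A A' : ModuleCat.{0} R}

lemma exists_isMinimalShortExact (h : IsSyzygyOf R K A) :
    ∃ (m : ℕ) (i : K →ₗ[R] (Fin m → R)) (f : (Fin m → R) →ₗ[R] A), IsMinimalShortExact i f := by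
  obtain ⟨m, f, hf, hker, ⟨e⟩⟩ := h
  exact ⟨m, _, _, (IsMinimalShortExact.of_ker_subtype hf hker).comp_equiv e (.refl R _) (.refl R A)⟩

lemma congr (h : IsSyzygyOf R K A) (eK : K ≃ₗ[R] K') (eA : A ≃ₗ[R] A') :
    IsSyzygyOf R K' A' := by
  obtain ⟨m, i, f, hif⟩ := h.exists_isMinimalShortExact
  exact (hif.comp_equiv eK.symm (.refl R _) eA).isSyzygyOf

lemma nonempty_equiv (h : IsSyzygyOf R K A) (h' : IsSyzygyOf R K' A') (e : A ≃ₗ[R] A') :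
    Nonempty (K ≃ₗ[R] K') := by
  obtain ⟨m, i, f, hif⟩ := (h.congr (.refl R K) e).exists_isMinimalShortExact
  obtain ⟨n, j, g, hjg⟩ := h'.exists_isMinimalShortExact
  exact hif.nonempty_equiv hjg

end IsSyzygyOf

namespace IsNthSyzygyOf

variable {K K' L A A' : ModuleCat.{0} R} {n : ℕ}

lemma nonempty_equiv (h : IsNthSyzygyOf R n K A) (h' : IsNthSyzygyOf R n K' A')
    (e : A ≃ₗ[R] A') : Nonempty (K ≃ₗ[R] K') := by
  induction n generalizing A A' with
  | zero =>
    obtain ⟨i⟩ := h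
    obtain ⟨j⟩ := h'
    exact ⟨i ≪≫ₗ e ≪≫ₗ j.symm⟩
  | succ n ih =>
    obtain ⟨L, hLA, hKL⟩ := h
    obtain ⟨L', hLA', hKL'⟩ := h'
    obtain ⟨t⟩ := hLA.nonempty_equiv hLA' e
    exact ih hKL hKL' t

lemma congr (h : IsNthSyzygyOf R n K A) (eK : K ≃ₗ[R] K') (eA : A ≃ₗ[R] A') :
    IsNthSyzygyOf R n K' A' := by
  induction n generalizing A A' with
  | zero =>
    obtain ⟨i⟩ := h
    exact ⟨eK.symm ≪≫ₗ i ≪≫ₗ eA⟩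
  | succ n ih =>
    obtain ⟨L, hLA, hKL⟩ := h
    exact ⟨L, hLA.congr (.refl R L) eA, ih hKL (.refl R L)⟩

lemma succ_iff : IsNthSyzygyOf R (n + 1) K A ↔
    ∃ L, IsNthSyzygyOf R n L A ∧ IsSyzygyOf R K L := by
  induction n generalizing A with
  | zero =>
    constructor
    · rintro ⟨L, hLA, ⟨e⟩⟩
      exact ⟨A, ⟨.refl R A⟩, hLA.congr e.symm (.refl R A)⟩
    · rintro ⟨L, ⟨e⟩, hKL⟩
      exact ⟨K, hKL.congr (.refl R K) e, ⟨.refl R K⟩⟩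
  | succ n ih =>
    constructor
    · rintro ⟨L, hLA, hKL⟩
      obtain ⟨L', hL'L, hKL'⟩ := ih.1 hKL
      exact ⟨L', ⟨L, hLA, hL'L⟩, hKL'⟩
    · rintro ⟨L', ⟨L, hLA, hL'L⟩, hKL'⟩
      exact ⟨L, hLA, ih.2 ⟨L', hL'L, hKL'⟩⟩

lemma exists_isMinimalShortExact (hL : IsNthSyzygyOf R n L A)
    (hK : IsNthSyzygyOf R (n + 1) K A) :
    ∃ (m : ℕ) (i : K →ₗ[R] (Fin m → R)) (f : (Fin m → R) →ₗ[R] L), IsMinimalShortExact i f := by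
  obtain ⟨L', hL'A, hKL'⟩ := succ_iff.1 hK
  obtain ⟨e⟩ := hL'A.nonempty_equiv hL (.refl R A)
  exact (hKL'.congr (.refl R K) e).exists_isMinimalShortExact

end IsNthSyzygyOf

end Syzygy

/-- The pullback of `f : F → N` along multiplication by `x` on `N`, as a submodule of `F × N`. -/
def smulPullback {R : Type*} [CommRing R] {F N : Type*} [AddCommGroup F] [Module R F]
    [AddCommGroup N] [Module R N] (x : R) (f : F →ₗ[R] N) : Submodule R (F × N) :=
  LinearMap.eqLocus (f ∘ₗ LinearMap.fst R F N) (x • LinearMap.snd R F N)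

namespace smulPullback

variable {R : Type*} [CommRing R] {F G K L N : Type*} [AddCommGroup F] [Module R F]
  [AddCommGroup G] [Module R G] [AddCommGroup K] [Module R K] [AddCommGroup L] [Module R L]
  [AddCommGroup N] [Module R N] {i : K →ₗ[R] F} {f : F →ₗ[R] N} {j : L →ₗ[R] G} {g : G →ₗ[R] K}

lemma mem_iff {x : R} {z : F × N} : z ∈ smulPullback x f ↔ f z.1 = x • z.2 := Iff.rfl

/-- A map `s` through which multiplication by `x` factors over `f` splits the projection of the
pullback onto `N`. -/
def splitEquiv (hi : Function.Injective i) (hif : Function.Exact i f) (s : N →ₗ[R] F) {x : R}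
    (hs : ∀ n, f (s n) = x • n) : (K × N) ≃ₗ[R] smulPullback x f :=
  LinearEquiv.ofBijective
    (((i.coprod s).prod (LinearMap.snd R K N)).codRestrict (smulPullback x f) fun z => by
      simp [mem_iff, hif.apply_apply_eq_zero, hs]) <| by
    constructor
    · rintro ⟨k, n⟩ ⟨k', n'⟩ h
      obtain ⟨h₁, rfl⟩ := Prod.ext_iff.1 (congrArg Subtype.val h)
      exact Prod.ext (hi (add_right_cancel h₁)) rfl
    · rintro ⟨⟨z, n⟩, h : f z = x • n⟩
      obtain ⟨k, hk⟩ := (hif (z - s n)).1 (by simp [h, hs])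
      exact ⟨(k, n), Subtype.ext (Prod.ext (by simp [hk]) rfl)⟩

/-- The projection of the pullback onto `F`; its range is `f ⁻¹ (x N)`. -/
def fst (x : R) (f : F →ₗ[R] N) : smulPullback x f →ₗ[R] F :=
  LinearMap.fst R F N ∘ₗ (smulPullback x f).subtype

/-- The map `(u, k) ↦ (u, - i k)`, whose range is the kernel of `smulPullback.cover`. -/
def inclusion (x : R) (i : K →ₗ[R] F) (g : G →ₗ[R] K) : smulPullback x g →ₗ[R] G × F :=
  LinearMap.prodMap LinearMap.id (-i) ∘ₗ (smulPullback x g).subtype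

/-- The map `(u, v) ↦ (i (g u) + x v, f v)` onto the pullback of `f`. -/
def cover (hif : Function.Exact i f) (x : R) (g : G →ₗ[R] K) : G × F →ₗ[R] smulPullback x f :=
  (((i ∘ₗ g).coprod (x • LinearMap.id)).prod (f ∘ₗ LinearMap.snd R G F)).codRestrict _ fun z => by
    simp [mem_iff, hif.apply_apply_eq_zero]

lemma cover_surjective (hif : Function.Exact i f) (x : R) (hf : Function.Surjective f)
    (hg : Function.Surjective g) : Function.Surjective (cover hif x g) := by
  rintro ⟨⟨z, n⟩, hn : f z = x • n⟩
  obtain ⟨v, rfl⟩ := hf n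
  obtain ⟨k, hk⟩ := (hif (z - x • v)).1 (by simp [hn])
  obtain ⟨u, rfl⟩ := hg k
  exact ⟨(u, v), Subtype.ext (Prod.ext (by simp [cover, hk]) rfl)⟩

lemma exact_inclusion_cover (hi : Function.Injective i) (hif : Function.Exact i f) (x : R)
    (g : G →ₗ[R] K) : Function.Exact (inclusion x i g) (cover hif x g) := by
  rintro ⟨u, v⟩
  have cover_eq_zero_iff : cover hif x g (u, v) = 0 ↔ i (g u) + x • v = 0 ∧ f v = 0 :=
    Subtype.ext_iff.trans Prod.ext_iff
  rw [cover_eq_zero_iff]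
  constructor
  · rintro ⟨h, hv⟩
    obtain ⟨k, rfl⟩ := (hif v).1 hv
    rw [← map_smul, ← map_add, map_eq_zero_iff i hi] at h
    exact ⟨⟨(u, -k), by simpa [mem_iff] using eq_neg_of_add_eq_zero_left h⟩, by simp [inclusion]⟩
  · rintro ⟨z, h⟩
    obtain ⟨rfl, rfl⟩ : z.1.1 = u ∧ -i z.1.2 = v := Prod.ext_iff.1 h
    simp [mem_iff.1 z.2, hif.apply_apply_eq_zero]

lemma inclusion_injective (x : R) (hi : Function.Injective i) (g : G →ₗ[R] K) :
    Function.Injective (inclusion x i g) :=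
  (Function.Injective.prodMap Function.injective_id (neg_injective.comp hi)).comp
    Subtype.val_injective

variable [IsLocalRing R] {x : R}

lemma fst_mem_smul_top (hx : x ∈ maximalIdeal R) (h : IsMinimalShortExact i f)
    (z : smulPullback x f) : fst x f z ∈ maximalIdeal R • (⊤ : Submodule R F) := by
  obtain ⟨⟨z, n⟩, hn : f z = x • n⟩ := z
  obtain ⟨y, rfl⟩ := h.surjective n
  have hker : z - x • y ∈ LinearMap.ker f := by simp [hn]
  have := add_mem (h.ker_le hker) (Submodule.smul_mem_smul hx (Submodule.mem_top (x := y)))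
  rwa [sub_add_cancel] at this

open Pointwise in
lemma isMinimalShortExact_fst_mkQ (hx : x ∈ maximalIdeal R) (hN : IsSMulRegular N x)
    (h : IsMinimalShortExact i f) :
    IsMinimalShortExact (fst x f)
      ((x • (⊤ : Submodule R N)).mkQ ∘ₗ f : F →ₗ[R] QuotSMulTop x N) where
  injective := by
    rintro ⟨⟨z, n⟩, hn⟩ ⟨⟨z', n'⟩, hn'⟩ (rfl : z = z')
    obtain rfl : n = n' := hN ((mem_iff.1 hn).symm.trans (mem_iff.1 hn'))
    rfl
  exact z := by
    rw [LinearMap.comp_apply, Submodule.mkQ_apply, Submodule.Quotient.mk_eq_zero,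
      Submodule.mem_smul_pointwise_iff_exists]
    constructor
    · rintro ⟨n, -, hn⟩
      exact ⟨⟨(z, n), hn.symm⟩, rfl⟩
    · rintro ⟨z, rfl⟩
      exact ⟨z.1.2, trivial, (mem_iff.1 z.2).symm⟩
  surjective := (Submodule.mkQ_surjective _).comp h.surjective
  mem_smul_top := fst_mem_smul_top hx h

lemma isMinimalShortExact_inclusion_cover (hx : x ∈ maximalIdeal R)
    (hif : IsMinimalShortExact i f) (hjg : IsMinimalShortExact j g) :
    IsMinimalShortExact (inclusion x i g) (cover hif.exact x g) where
  injective := inclusion_injective x hif.injective g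
  exact := exact_inclusion_cover hif.injective hif.exact x g
  surjective := cover_surjective hif.exact x hif.surjective hjg.surjective
  mem_smul_top z := by
    have hu : LinearMap.inl R G F z.1.1 ∈ maximalIdeal R • (⊤ : Submodule R (G × F)) :=
      Submodule.smul_top_le_comap_smul_top _ _ (fst_mem_smul_top hx hjg z)
    have hv : LinearMap.inr R G F (-i z.1.2) ∈ maximalIdeal R • (⊤ : Submodule R (G × F)) :=
      Submodule.smul_top_le_comap_smul_top _ _ (neg_mem (hif.mem_smul_top z.1.2))
    simpa [inclusion] using add_mem hu hv

end smulPullback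

section Quotient

variable {R} {x : R} {N : Type} [AddCommGroup N] [Module R N]
  {n : ℕ} {L : ModuleCat.{0} R} {K F : Type} [AddCommGroup K] [Module R K] [AddCommGroup F]
  [Module R F] [Module.Free R F] [Module.Finite R F] {i : K →ₗ[R] F} {f : F →ₗ[R] L}

lemma IsNthSyzygyOf.smulPullback (hx : x ∈ maximalIdeal R) (hN : IsSMulRegular N x)
    (hL : IsNthSyzygyOf R n L (ModuleCat.of R N)) (hif : IsMinimalShortExact i f) :
    IsNthSyzygyOf R (n + 1) (ModuleCat.of R (smulPullback x f))
      (ModuleCat.of R (QuotSMulTop x N)) := by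
  induction n generalizing L K F with
  | zero =>
    obtain ⟨e⟩ := hL
    have hLreg : IsSMulRegular L x := (e.isSMulRegular_congr x).2 hN
    have h := (smulPullback.isMinimalShortExact_fst_mkQ hx hLreg hif).isSyzygyOf
    exact ⟨_, h.congr (.refl R _) (QuotSMulTop.congr x e), ⟨.refl R _⟩⟩
  | succ n ih =>
    obtain ⟨L', hL', hLL'⟩ := IsNthSyzygyOf.succ_iff.1 hL
    obtain ⟨m, i', f', hif'⟩ := hLL'.exists_isMinimalShortExact
    exact IsNthSyzygyOf.succ_iff.2 ⟨_, ih hL' hif',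
      (smulPullback.isMinimalShortExact_inclusion_cover hx hif' hif).isSyzygyOf⟩

theorem IsNthSyzygyOf.quotSMulTop_of_section (hx : x ∈ maximalIdeal R) (hN : IsSMulRegular N x)
    (hL : IsNthSyzygyOf R n L (ModuleCat.of R N)) (hif : IsMinimalShortExact i f)
    {s : L →ₗ[R] F} (hs : ∀ z, f (s z) = x • z) :
    IsNthSyzygyOf R (n + 1) (ModuleCat.of R (K × L)) (ModuleCat.of R (QuotSMulTop x N)) :=
  (hL.smulPullback hx hN hif).congr
    (smulPullback.splitEquiv hif.injective hif.exact s hs).symm (.refl R _)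

end Quotient

section ExtSyzygy

namespace IsMinimalShortExact

universe u

variable {R : Type u} [CommRing R] [IsLocalRing R] {K F A : Type u} [AddCommGroup K] [Module R K]
  [AddCommGroup F] [Module R F] [AddCommGroup A] [Module R A] {i : K →ₗ[R] F} {f : F →ₗ[R] A}

/-- A minimal short exact sequence as a short complex in `ModuleCat R`, the form in which the
results on `Ext` apply to it. -/
def shortComplex (h : IsMinimalShortExact i f) : ShortComplex (ModuleCat.{u} R) :=
  ModuleCat.shortComplexOfCompEqZero i f h.exact.linearMap_comp_eq_zero

lemma shortExact (h : IsMinimalShortExact i f) : h.shortComplex.ShortExact :=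
  ModuleCat.shortComplex_shortExact _ h.exact h.injective h.surjective

lemma projective_shortComplex_X₂ [Module.Projective R F] (h : IsMinimalShortExact i f) :
    Projective h.shortComplex.X₂ :=
  inferInstanceAs (Projective (ModuleCat.of R F))

lemma exists_section [Module.Projective R F] (h : IsMinimalShortExact i f) {x : R}
    (hx : ∀ e : ((Ext R (ModuleCat.{u} R) 1).obj
      (Opposite.op (ModuleCat.of R A))).obj (ModuleCat.of R K), x • e = 0) :
    ∃ s : A →ₗ[R] F, ∀ z, f (s z) = x • z := by
  have := h.projective_shortComplex_X₂
  obtain ⟨s, hs⟩ := exists_comp_eq_smul_id h.shortExact hx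
  exact ⟨s.hom, fun z => congrArg (fun φ => φ.hom z) hs⟩

end IsMinimalShortExact

namespace IsNthSyzygyOf

variable {R} {n : ℕ} {L A : ModuleCat.{0} R}

lemma nonempty_extIso (hL : IsNthSyzygyOf R n L A) (W : ModuleCat.{0} R) :
    Nonempty (((Ext R (ModuleCat.{0} R) (n + 1)).obj (Opposite.op A)).obj W ≅
      ((Ext R (ModuleCat.{0} R) 1).obj (Opposite.op L)).obj W) := by
  induction n generalizing A with
  | zero =>
    obtain ⟨e⟩ := hL
    exact ⟨((Ext R (ModuleCat.{0} R) 1).mapIso e.toModuleIso.op).app W⟩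
  | succ n ih =>
    obtain ⟨L', hL'A, hLL'⟩ := hL
    obtain ⟨φ⟩ := ih hLL'
    obtain ⟨m, i, f, hif⟩ := hL'A.exists_isMinimalShortExact
    have := hif.projective_shortComplex_X₂
    exact ⟨extSuccIso hif.shortExact n W ≪≫ φ⟩

lemma smul_ext_one_eq_zero (hL : IsNthSyzygyOf R n L A) {W : ModuleCat.{0} R} {x : R}
    (hx : ∀ e : ((Ext R (ModuleCat.{0} R) (n + 1)).obj (Opposite.op A)).obj W, x • e = 0)
    (e : ((Ext R (ModuleCat.{0} R) 1).obj (Opposite.op L)).obj W) : x • e = 0 := by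
  obtain ⟨φ⟩ := hL.nonempty_extIso W
  let ψ := φ.toLinearEquiv
  rw [← ψ.apply_symm_apply e, ← map_smul, hx, map_zero]

end IsNthSyzygyOf

end ExtSyzygy

section FinsetIndex

/-- Subsets of `Fin (n + 1)` as shifted subsets `S` of `Fin n`, with `0` adjoined on the first
summand and without it on the second. -/
def finsetSumFinsetEquiv (n : ℕ) : Finset (Fin n) ⊕ Finset (Fin n) ≃ Finset (Fin (n + 1)) :=
  Equiv.ofBijective
    (Sum.elim (fun S => Finset.cons 0 (S.map (Fin.succEmb n)) (by simp))
      fun S => S.map (Fin.succEmb n)) <| by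
    rw [Fintype.bijective_iff_injective_and_card]
    refine ⟨Function.Injective.sumElim (fun S T h => ?_) (Finset.map_injective _) fun S T h => ?_,
      by simp [pow_succ, mul_two]⟩
    · simpa using congrArg (Finset.erase · 0) h
    · have : (0 : Fin (n + 1)) ∈ T.map (Fin.succEmb n) := h ▸ Finset.mem_cons_self _ _
      simp at this

lemma card_finsetSumFinsetEquiv_inl {n : ℕ} (S : Finset (Fin n)) :
    (finsetSumFinsetEquiv n (Sum.inl S)).card = S.card + 1 := by
  simp [finsetSumFinsetEquiv]

lemma card_finsetSumFinsetEquiv_inr {n : ℕ} (S : Finset (Fin n)) :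
    (finsetSumFinsetEquiv n (Sum.inr S)).card = S.card := by
  simp [finsetSumFinsetEquiv]

variable (R : Type*) [Semiring R] (M : ℕ → Type*) [∀ k, AddCommMonoid (M k)] [∀ k, Module R (M k)]
  (n : ℕ)

/-- Pascal's rule for products indexed by the subsets of a finite set: a subset of `Fin (n + 1)`
either contains `0` or does not. -/
def piFinsetSuccEquiv :
    ((∀ S : Finset (Fin n), M (S.card + 1)) × (∀ S : Finset (Fin n), M S.card)) ≃ₗ[R]
      ∀ S : Finset (Fin (n + 1)), M S.card :=
  (LinearEquiv.prodCongr
      (LinearEquiv.piCongrRight fun S => .cast (card_finsetSumFinsetEquiv_inl S).symm)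
      (LinearEquiv.piCongrRight fun S => .cast (card_finsetSumFinsetEquiv_inr S).symm)) ≪≫ₗ
    (LinearEquiv.sumPiEquivProdPi R _ _ fun S => M (finsetSumFinsetEquiv n S).card).symm ≪≫ₗ
    LinearEquiv.piCongrLeft R (fun S => M S.card) (finsetSumFinsetEquiv n)

/-- Sorts a product indexed by subsets according to their cardinality. -/
def piFinsetEquivPiChoose :
    (∀ S : Finset (Fin n), M S.card) ≃ₗ[R] ∀ k : Fin (n + 1), Fin (n.choose k) → M k :=
  let size (S : Finset (Fin n)) : Fin (n + 1) := ⟨S.card, Nat.lt_succ_of_le (card_finset_fin_le S)⟩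
  have card_size_eq (k : Fin (n + 1)) : Fintype.card {S // size S = k} = n.choose k := by
    simp [size, Fin.ext_iff]
  (LinearEquiv.piCongrLeft R (fun S => M (size S)) (Equiv.sigmaFiberEquiv size)).symm ≪≫ₗ
    (LinearEquiv.piCongrRight fun S => .cast (M := M) (congrArg Fin.val S.2.2)) ≪≫ₗ
    LinearEquiv.piCurry R (fun (k : Fin (n + 1)) (_ : {S // size S = k}) => M k) ≪≫ₗ
    LinearEquiv.piCongrRight fun k =>
      LinearEquiv.funCongrLeft R (M k) (Fintype.equivFinOfCardEq (card_size_eq k)).symm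

end FinsetIndex

section RegularSequence

/-- The quotient by a sequence, formed by killing its last element last. -/
def quotOfListAppendEquiv {S : Type*} [CommRing S] (N : Type*) [AddCommGroup N] [Module S N]
    (ys : List S) (x : S) :
    QuotSMulTop x (N ⧸ (Ideal.ofList ys • ⊤ : Submodule S N)) ≃ₗ[S]
      N ⧸ (Ideal.ofList (ys ++ [x]) • ⊤ : Submodule S N) :=
  (Submodule.quotOfListConsSMulTopEquivQuotSMulTopOuter N x ys).symm ≪≫ₗ
    Submodule.quotEquivOfEq _ _ (by
      rw [Ideal.ofList_cons, Ideal.ofList_append, Ideal.ofList_singleton, sup_comm])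

variable {R}

theorem IsNthSyzygyOf.quotient_ofList {M : Type} [AddCommGroup M] [Module R M]
    {Om : ℕ → ModuleCat.{0} R} {xs : List R}
    (hxs : ∀ x ∈ xs, x ∈ maximalIdeal R) (hM : RingTheory.Sequence.IsWeaklyRegular M xs)
    (hOm : ∀ k ≤ xs.length, IsNthSyzygyOf R k (Om k) (ModuleCat.of R M))
    (hann : ∀ x ∈ xs, ∀ k < xs.length, ∀ e : ((Ext R (ModuleCat.{0} R) (k + 1)).obj
      (Opposite.op (ModuleCat.of R M))).obj (Om (k + 1)), x • e = 0) :
    IsNthSyzygyOf R xs.length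
      (ModuleCat.of R (∀ S : Finset (Fin xs.length), Om S.card))
      (ModuleCat.of R (M ⧸ (Ideal.ofList xs • ⊤ : Submodule R M))) := by
  induction xs using List.reverseRecOn with
  | nil =>
    obtain ⟨e⟩ := hOm 0 le_rfl
    exact ⟨LinearEquiv.piUnique R (fun S : Finset (Fin 0) => Om S.card) ≪≫ₗ e ≪≫ₗ
      (Submodule.quotEquivOfEqBot _ (by simp)).symm⟩
  | append_singleton ys x ih =>
    rw [List.length_append, List.length_singleton]
    simp only [List.length_append, List.length_singleton, List.mem_append, List.mem_singleton]
      at hxs hOm hann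
    rw [RingTheory.Sequence.isWeaklyRegular_append_iff,
      RingTheory.Sequence.isWeaklyRegular_singleton_iff] at hM
    have hL := ih (fun y hy => hxs y (.inl hy)) hM.1 (fun k hk => hOm k (by lia))
      fun y hy k hk => hann y (.inl hy) k (by lia)
    have card_le (S : Finset (Fin ys.length)) : S.card ≤ ys.length := card_finset_fin_le S
    choose m i f hif using fun S : Finset (Fin ys.length) =>
      (hOm S.card (card_le S).step).exists_isMinimalShortExact
        (hOm (S.card + 1) (Nat.succ_le_succ (card_le S)))
    choose s hs using fun S : Finset (Fin ys.length) =>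
      (hif S).exists_section ((hOm S.card (card_le S).step).smul_ext_one_eq_zero
        (hann x (.inr rfl) S.card (Nat.lt_succ_of_le (card_le S))))
    exact (hL.quotSMulTop_of_section (hxs x (.inr rfl)) hM.2 (.pi hif)
        (s := LinearMap.piMap s) fun z => funext fun S => hs S (z S)).congr
      (piFinsetSuccEquiv R (fun k => Om k) ys.length) (quotOfListAppendEquiv M ys x)

end RegularSequence

theorem nth_syzygy_quotient_regular_sequence_general
    (M : Type) [AddCommGroup M] [Module R M]
    (xs : List R)
    (hMreg : RingTheory.Sequence.IsRegular M xs)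
    (K : ModuleCat.{0} R)
    (hK : IsNthSyzygyOf R xs.length K
      (ModuleCat.of R (M ⧸ (Ideal.ofList xs • (⊤ : Submodule R M)))))
    (Om : ℕ → ModuleCat.{0} R)
    (hOm : ∀ i ≤ xs.length, IsNthSyzygyOf R i (Om i) (ModuleCat.of R M))
    (hann : ∀ x ∈ xs, ∀ i < xs.length,
      ∀ e : ((Ext R (ModuleCat.{0} R) (i + 1)).obj
        (Opposite.op (ModuleCat.of R M))).obj (Om (i + 1)), x • e = 0) :
    Nonempty (K ≃ₗ[R]
      Π i : Fin (xs.length + 1), Fin (Nat.choose xs.length i) → Om i) := by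
  have hxs_top : Ideal.ofList xs ≠ ⊤ := fun h =>
    hMreg.top_ne_smul (by rw [h, Submodule.top_smul])
  have hxs (x : R) (hx : x ∈ xs) : x ∈ maximalIdeal R :=
    le_maximalIdeal hxs_top (Ideal.subset_span hx)
  have hΩ := IsNthSyzygyOf.quotient_ofList hxs hMreg.toIsWeaklyRegular hOm hann
  obtain ⟨e⟩ := hK.nonempty_equiv hΩ (.refl R _)
  exact ⟨e ≪≫ₗ piFinsetEquivPiChoose R (fun k => Om k) xs.length⟩

/-- if `x₁, …, xₙ` is an `R`- and `M`-sequence contained in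
`⋂_{1 ≤ i,j ≤ n} Ann Extⁱ(M, Ωʲ M)`, then
`Ωⁿ(M/(x₁,…,xₙ)M) ≅ ⨁_{i=0}^n (Ωⁱ M)^(n choose i)`. -/
theorem nth_syzygy_quotient_regular_sequence
    [IsNoetherianRing R]
    (M : Type) [AddCommGroup M] [Module R M] [Module.Finite R M]
    (xs : List R)
    (hRreg : RingTheory.Sequence.IsRegular R xs)
    (hMreg : RingTheory.Sequence.IsRegular M xs)
    (hann : ∀ x ∈ xs, ∀ i j : ℕ, 1 ≤ i → i ≤ xs.length → 1 ≤ j → j ≤ xs.length →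
      ∀ Ω : ModuleCat.{0} R, IsNthSyzygyOf R j Ω (ModuleCat.of R M) →
        ∀ e : ((Ext R (ModuleCat.{0} R) i).obj
          (Opposite.op (ModuleCat.of R M))).obj Ω, x • e = 0)
    (K : ModuleCat.{0} R)
    (hK : IsNthSyzygyOf R xs.length K
      (ModuleCat.of R (M ⧸ (Ideal.ofList xs • (⊤ : Submodule R M)))))
    (Om : ℕ → ModuleCat.{0} R)
    (hOm : ∀ i ≤ xs.length, IsNthSyzygyOf R i (Om i) (ModuleCat.of R M)) :
    Nonempty (K ≃ₗ[R]
      Π i : Fin (xs.length + 1), Fin (Nat.choose xs.length i) → Om i) :=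
  nth_syzygy_quotient_regular_sequence_general R M xs hMreg K hK Om hOm fun x hx i hi =>
    hann x hx (i + 1) (i + 1) (by lia) hi (by lia) hi _ (hOm (i + 1) hi)
end
end

section
/- Let R be a commutative Noetherian local ring with residue field k, and let M be a finitely generated R-module of finite length. Then for every n ≥ 0, the n-th syzygy Ω^n M belongs to the extension closure of Ω^n k, i.e., the smallest subcategory of finitely generated R-modules containing Ω^n k that is closed under direct summands and extensions. -/
open CategoryTheory IsLocalRing

noncomputable section

variable (R : Type) [CommRing R] [IsLocalRing R]

/-!
Drop minimality first: the modules having *some* `n`-th syzygy in a given extension-closed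
subcategory are themselves closed under extensions, by the horseshoe lemma. Hence if this class
contains `k`, it contains every module of finite length. Minimality is recovered at the end: by
Nakayama's lemma a minimal free cover `F → M` is right minimal, so its kernel is a retract of the
kernel of any epimorphism from a projective onto a module having `M` as a retract.
-/

section Syzygies

universe v u

open Limits ZeroObject

/-- The objects `X` admitting an epimorphism `f : Q ⟶ X` from a projective object whose kernel
satisfies `P`. No minimality is required of `f`, so the `n`-th iterate `hasSyzygyIn^[n] P` consists
of the objects for which some, not necessarily minimal, `n`-th syzygy satisfies `P`. -/
def hasSyzygyIn {C : Type u} [Category.{v} C] [HasZeroMorphisms C] [HasKernels C]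
    (P : ObjectProperty C) : ObjectProperty C :=
  fun X ↦ ∃ (Q : C) (f : Q ⟶ X), Projective Q ∧ Epi f ∧ P (kernel f)

/-- A morphism `f : X ⟶ Y` is right minimal if every endomorphism of `X` over `Y` is an
isomorphism. This is the categorical form of minimality of a free cover. -/
def IsRightMinimal {C : Type u} [Category.{v} C] {X Y : C} (f : X ⟶ Y) : Prop :=
  ∀ θ : X ⟶ X, θ ≫ f = f → IsIso θ

variable {C : Type u} [Category.{v} C] [Abelian C]

lemma shortExact_kernel {S₁ S₂ : ShortComplex C} (φ : S₁ ⟶ S₂) (h₁ : S₁.ShortExact)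
    (h₂ : S₂.ShortExact) [Epi φ.τ₁] : (kernel φ).ShortExact := by
  have := h₁.mono_f
  let D : ShortComplex.SnakeInput C :=
    { L₀ := kernel φ
      L₁ := S₁
      L₂ := S₂
      L₃ := cokernel φ
      v₀₁ := kernel.ι φ
      v₁₂ := φ
      v₂₃ := cokernel.π φ
      w₀₂ := kernel.condition φ
      w₁₃ := cokernel.condition φ
      h₀ := kernelIsKernel φ
      h₃ := cokernelIsCokernel φ
      L₁_exact := h₁.exact
      epi_L₁_g := h₁.epi_g
      L₂_exact := h₂.exact
      mono_L₂_f := h₂.mono_f }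
  have v₂₃_eq_zero : D.v₂₃.τ₁ = 0 := zero_of_epi_comp φ.τ₁ D.w₁₃_τ₁
  have : Epi D.v₂₃.τ₁ := D.epi_v₂₃_τ₁
  have δ_eq_zero : D.δ = 0 :=
    (IsZero.of_epi_eq_zero D.v₂₃.τ₁ v₂₃_eq_zero).eq_zero_of_tgt _
  exact
    { exact := D.L₀_exact
      mono_f := D.mono_L₀_f
      epi_g := D.L₁'_exact.epi_f δ_eq_zero }

section HasSyzygyIn

variable (P : ObjectProperty C)

instance [P.IsClosedUnderIsomorphisms] : (hasSyzygyIn P).IsClosedUnderIsomorphisms where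
  of_iso := by
    rintro X Y e ⟨Q, f, hQ, hf, hP⟩
    exact ⟨Q, f ≫ e.hom, hQ, inferInstance, P.prop_of_iso (kernelCompMono f e.hom).symm hP⟩

instance [P.ContainsZero] [P.IsClosedUnderIsomorphisms] : (hasSyzygyIn P).ContainsZero where
  exists_zero :=
    have h₀ : IsZero (0 : C) := isZero_zero C
    ⟨0, h₀, 0, 𝟙 0, h₀.projective, inferInstance,
      P.prop_of_isZero (h₀.of_mono (kernel.ι (𝟙 0)))⟩

instance [P.IsClosedUnderExtensions] [P.IsClosedUnderIsomorphisms] :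
    (hasSyzygyIn P).IsClosedUnderExtensions where
  prop_X₂_of_shortExact := by
    rintro S hS ⟨Q₁, u, _, _, hu⟩ ⟨Q₃, v, _, _, hv⟩
    have := hS.epi_g
    let T : ShortComplex C := .mk (biprod.inl : Q₁ ⟶ Q₁ ⊞ Q₃) biprod.snd biprod.inl_snd
    have hT : T.ShortExact := (ShortComplex.Splitting.ofHasBinaryBiproduct Q₁ Q₃).shortExact
    let φ : T ⟶ S :=
      { τ₁ := u
        τ₂ := biprod.desc (u ≫ S.f) (Projective.factorThru v S.g)
        τ₃ := v }
    have : Epi φ.τ₁ := ‹Epi u›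
    have : Epi φ.τ₃ := ‹Epi v›
    have := hT.epi_g
    have hker : P (kernel φ).X₂ := P.prop_X₂_of_shortExact (shortExact_kernel φ hT hS)
      (P.prop_of_iso (PreservesKernel.iso ShortComplex.π₁ φ).symm hu)
      (P.prop_of_iso (PreservesKernel.iso ShortComplex.π₃ φ).symm hv)
    exact ⟨Q₁ ⊞ Q₃, φ.τ₂, inferInstance, ShortComplex.epi_τ₂_of_exact_of_epi φ hS.exact,
      P.prop_of_iso (PreservesKernel.iso ShortComplex.π₂ φ) hker⟩

instance [P.IsClosedUnderIsomorphisms] (n : ℕ) :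
    (hasSyzygyIn^[n] P).IsClosedUnderIsomorphisms := by
  induction n with
  | zero => assumption
  | succ n ih => rw [Function.iterate_succ_apply']; infer_instance

instance [P.ContainsZero] [P.IsClosedUnderIsomorphisms] (n : ℕ) :
    (hasSyzygyIn^[n] P).ContainsZero := by
  induction n with
  | zero => assumption
  | succ n ih => rw [Function.iterate_succ_apply']; infer_instance

instance [P.IsClosedUnderExtensions] [P.IsClosedUnderIsomorphisms] (n : ℕ) :
    (hasSyzygyIn^[n] P).IsClosedUnderExtensions := by
  induction n with
  | zero => assumption
  | succ n ih => rw [Function.iterate_succ_apply']; infer_instance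

end HasSyzygyIn

lemma IsRightMinimal.nonempty_retract_kernel {Q Q' X Y : C} [Projective Q] [Projective Q']
    {f : Q ⟶ X} {g : Q' ⟶ Y} [Epi f] [Epi g] (hf : IsRightMinimal f) (r : Retract X Y) :
    Nonempty (Retract (kernel f) (kernel g)) := by
  let φ : Q ⟶ Q' := Projective.factorThru (f ≫ r.i) g
  let ψ : Q' ⟶ Q := Projective.factorThru (g ≫ r.r) f
  have hφ : φ ≫ g = f ≫ r.i := Projective.factorThru_comp _ _
  have hψ : ψ ≫ f = g ≫ r.r := Projective.factorThru_comp _ _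
  have hφψ : (φ ≫ ψ) ≫ f = f := by
    rw [Category.assoc, hψ, reassoc_of% hφ, r.retract, Category.comp_id]
  have : IsIso (φ ≫ ψ) := hf _ hφψ
  have hψ' : (ψ ≫ inv (φ ≫ ψ)) ≫ f = g ≫ r.r := by
    rw [Category.assoc, (IsIso.inv_comp_eq _).2 hφψ.symm, hψ]
  refine ⟨⟨kernel.map f g φ r.i hφ.symm, kernel.map g f (ψ ≫ inv (φ ≫ ψ)) r.r hψ'.symm, ?_⟩⟩
  ext
  simp only [Category.assoc, kernel.lift_ι, kernel.lift_ι_assoc, Category.id_comp]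
  rw [← Category.assoc φ, IsIso.hom_inv_id, Category.comp_id]

lemma IsRightMinimal.retractClosure_kernel {P : ObjectProperty C} {Q X : C} [Projective Q]
    {f : Q ⟶ X} [Epi f] (hf : IsRightMinimal f) (hX : (hasSyzygyIn P).retractClosure X) :
    P.retractClosure (kernel f) := by
  obtain ⟨Y, ⟨Q', g, _, _, hg⟩, ⟨r⟩⟩ := hX
  exact ⟨kernel g, hg, hf.nonempty_retract_kernel r⟩

end Syzygies

section Modules

universe v u

lemma isRightMinimal_of_ker_le_smul_top {A : Type u} [CommRing A] {F M : Type v} [AddCommGroup F]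
    [Module A F] [Module.Finite A F] [AddCommGroup M] [Module A M] {I : Ideal A}
    (hI : I ≤ Ideal.jacobson ⊥) {f : F →ₗ[A] M} (hf : LinearMap.ker f ≤ I • ⊤) :
    IsRightMinimal (ModuleCat.ofHom f) := by
  intro θ hθ
  have f_comp_θ (x : F) : f (θ x) = f x := ConcreteCategory.congr_hom hθ x
  have range_eq_top : LinearMap.range θ.hom = ⊤ := by
    refine top_le_iff.1 <| Submodule.le_of_le_smul_of_le_jacobson_bot Module.Finite.fg_top hI ?_
    intro x _
    have sub_mem_ker : x - θ x ∈ LinearMap.ker f := by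
      rw [LinearMap.mem_ker, map_sub, f_comp_θ, sub_self]
    exact Submodule.mem_sup.2 ⟨θ x, ⟨x, rfl⟩, x - θ x, hf sub_mem_ker, add_sub_cancel _ _⟩
  have surjective : Function.Surjective θ.hom := LinearMap.range_eq_top.1 range_eq_top
  exact (ConcreteCategory.isIso_iff_bijective θ).2
    ⟨OrzechProperty.injective_of_surjective_endomorphism θ.hom surjective, surjective⟩

lemma prop_of_isFiniteLength {A : Type u} [Ring A] (P : ObjectProperty (ModuleCat.{v} A))
    [P.IsClosedUnderExtensions] [P.ContainsZero] [P.IsClosedUnderIsomorphisms]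
    (hsimple : ∀ (M : Type v) [AddCommGroup M] [Module A M] [IsSimpleModule A M],
      P (ModuleCat.of A M))
    {M : Type v} [AddCommGroup M] [Module A M] (hM : IsFiniteLength A M) :
    P (ModuleCat.of A M) := by
  induction hM with
  | of_subsingleton => exact P.prop_of_isZero (ModuleCat.isZero_of_subsingleton _)
  | @of_simple_quotient M _ _ N _ _ hN =>
    let S : ShortComplex (ModuleCat.{v} A) :=
      ModuleCat.shortComplexOfCompEqZero N.subtype N.mkQ (by ext; simp)
    have hS : S.ShortExact := ModuleCat.shortComplex_shortExact S
      (LinearMap.exact_subtype_mkQ N) N.injective_subtype N.mkQ_surjective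
    exact P.prop_X₂_of_shortExact hS hN (hsimple (M ⧸ N))

lemma nonempty_linearEquiv_residueField_of_isSimpleModule (A : Type u) [CommRing A]
    [IsLocalRing A] (M : Type v) [AddCommGroup M] [Module A M] [IsSimpleModule A M] :
    Nonempty (M ≃ₗ[A] ResidueField A) := by
  obtain ⟨I, hI, e⟩ := isSimpleModule_iff_quot_maximal.1 ‹IsSimpleModule A M›
  obtain rfl := eq_maximalIdeal hI
  exact e

lemma prop_of_isFiniteLength_of_residueField {A : Type u} [CommRing A] [IsLocalRing A]
    (P : ObjectProperty (ModuleCat.{u} A)) [P.IsClosedUnderExtensions] [P.ContainsZero]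
    [P.IsClosedUnderIsomorphisms] (hP : P (ModuleCat.of A (ResidueField A)))
    {M : Type u} [AddCommGroup M] [Module A M] (hM : IsFiniteLength A M) :
    P (ModuleCat.of A M) := by
  refine prop_of_isFiniteLength P (fun N _ _ _ ↦ ?_) hM
  obtain ⟨e⟩ := nonempty_linearEquiv_residueField_of_isSimpleModule A N
  exact P.prop_of_iso e.symm.toModuleIso hP

lemma isStableUnderRetracts_of_prod {A : Type u} [Ring A] {P : ObjectProperty (ModuleCat.{v} A)}
    (hP : ∀ X Y Z : ModuleCat.{v} A, P X → Nonempty (X ≃ₗ[A] (Y × Z)) → P Y) :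
    P.IsStableUnderRetracts where
  of_retract {X Y} r hY :=
    hP Y X (ModuleCat.of A (Y ⧸ LinearMap.range r.i.hom)) hY
      ⟨(lequivProdOfLeftSplitExact (Submodule.mkQ_surjective _) (Submodule.ker_mkQ _).symm
        (ModuleCat.hom_ext_iff.1 r.retract)).symm⟩

lemma isClosedUnderExtensions_of_range_eq_ker {A : Type u} [Ring A]
    {P : ObjectProperty (ModuleCat.{v} A)}
    (hP : ∀ (X Y Z : ModuleCat.{v} A) (f : X →ₗ[A] Y) (g : Y →ₗ[A] Z), Function.Injective f →
      Function.Surjective g → LinearMap.range f = LinearMap.ker g → P X → P Z → P Y) :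
    P.IsClosedUnderExtensions where
  prop_X₂_of_shortExact {S} hS := hP S.X₁ S.X₂ S.X₃ S.f.hom S.g.hom hS.moduleCat_injective_f
    hS.moduleCat_surjective_g hS.exact.moduleCat_range_eq_ker

end Modules

section MinimalSyzygies

variable {R}

lemma IsSyzygyOf.exists_isRightMinimal {K M : ModuleCat.{0} R} (h : IsSyzygyOf R K M) :
    ∃ (Q : ModuleCat.{0} R) (f : Q ⟶ M), Projective Q ∧ Epi f ∧ IsRightMinimal f ∧
      Nonempty (K ≅ Limits.kernel f) := by
  obtain ⟨m, f, hf, hker, ⟨e⟩⟩ := h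
  exact ⟨ModuleCat.of R (Fin m → R), ModuleCat.ofHom f,
    ModuleCat.projective_of_free (Pi.basisFun R (Fin m)), (ModuleCat.epi_iff_surjective _).2 hf,
    isRightMinimal_of_ker_le_smul_top (maximalIdeal_le_jacobson ⊥) hker,
    ⟨e.toModuleIso ≪≫ (ModuleCat.kernelIsoKer (ModuleCat.ofHom f)).symm⟩⟩

lemma IsNthSyzygyOf.hasSyzygyIn_iterate {P : ObjectProperty (ModuleCat.{0} R)}
    [P.IsClosedUnderIsomorphisms] {n : ℕ} {K M : ModuleCat.{0} R} (h : IsNthSyzygyOf R n K M)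
    (hK : P K) : (hasSyzygyIn^[n] P) M := by
  induction n generalizing M with
  | zero => exact h.elim fun e ↦ P.prop_of_iso e.toModuleIso hK
  | succ n ih =>
    obtain ⟨K', hK', h⟩ := h
    obtain ⟨Q, f, hQ, hf, -, ⟨e⟩⟩ := hK'.exists_isRightMinimal
    rw [Function.iterate_succ_apply']
    exact ⟨Q, f, hQ, hf, ObjectProperty.prop_of_iso _ e (ih h)⟩

lemma IsNthSyzygyOf.retractClosure {P : ObjectProperty (ModuleCat.{0} R)} {n : ℕ}
    {K M : ModuleCat.{0} R} (h : IsNthSyzygyOf R n K M)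
    (hM : (hasSyzygyIn^[n] P).retractClosure M) : P.retractClosure K := by
  induction n generalizing M with
  | zero => exact h.elim fun e ↦ ObjectProperty.prop_of_iso _ e.toModuleIso.symm hM
  | succ n ih =>
    obtain ⟨K', hK', h⟩ := h
    obtain ⟨Q, f, _, _, hmin, ⟨e⟩⟩ := hK'.exists_isRightMinimal
    rw [Function.iterate_succ_apply'] at hM
    exact ih h (ObjectProperty.prop_of_iso _ e.symm (hmin.retractClosure_kernel hM))

end MinimalSyzygies

theorem nth_syzygy_of_finite_length_mem_ext_closure_of_nth_syzygy_residue_field_general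
    (M : Type) [AddCommGroup M] [Module R M] (hM : IsFiniteLength R M) (n : ℕ)
    (K Kk : ModuleCat.{0} R) (hK : IsNthSyzygyOf R n K (ModuleCat.of R M))
    (hKk : IsNthSyzygyOf R n Kk (ModuleCat.of R (ResidueField R)))
    (P : ObjectProperty (ModuleCat.{0} R)) [P.IsStableUnderRetracts] [P.IsClosedUnderExtensions]
    (hP : P Kk) : P K := by
  have : P.Nonempty := ObjectProperty.nonempty_of_prop hP
  have hk : (hasSyzygyIn^[n] P) (ModuleCat.of R (ResidueField R)) := hKk.hasSyzygyIn_iterate hP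
  have hM' : (hasSyzygyIn^[n] P) (ModuleCat.of R M) :=
    prop_of_isFiniteLength_of_residueField _ hk hM
  rw [← P.retractClosure_eq_self]
  exact hK.retractClosure (ObjectProperty.le_retractClosure _ _ hM')

/-- if `M` has finite length then `Ωⁿ M` lies in the extension
closure of `Ωⁿ k`, i.e. it belongs to every subcategory that contains `Ωⁿ k`
and is closed under isomorphisms, direct summands and extensions. -/
theorem nth_syzygy_of_finite_length_mem_ext_closure_of_nth_syzygy_residue_field
    [IsNoetherianRing R]
    (M : Type) [AddCommGroup M] [Module R M] [Module.Finite R M]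
    (hM : IsFiniteLength R M)
    (n : ℕ) (K Kk : ModuleCat.{0} R)
    (hK : IsNthSyzygyOf R n K (ModuleCat.of R M))
    (hKk : IsNthSyzygyOf R n Kk (ModuleCat.of R (ResidueField R)))
    (S : Set (ModuleCat.{0} R))
    (hiso : ∀ A B : ModuleCat.{0} R, A ∈ S → Nonempty (A ≃ₗ[R] B) → B ∈ S)
    (hsummand : ∀ A B C : ModuleCat.{0} R, A ∈ S →
      Nonempty (A ≃ₗ[R] (↥B × ↥C)) → B ∈ S)
    (hext : ∀ (A B C : ModuleCat.{0} R) (f : A →ₗ[R] B) (g : B →ₗ[R] C),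
      Function.Injective f → Function.Surjective g →
      LinearMap.range f = LinearMap.ker g → A ∈ S → C ∈ S → B ∈ S)
    (hKkS : Kk ∈ S) :
    K ∈ S := by
  have : ObjectProperty.IsStableUnderRetracts (· ∈ S) := isStableUnderRetracts_of_prod hsummand
  have : ObjectProperty.IsClosedUnderExtensions (· ∈ S) :=
    isClosedUnderExtensions_of_range_eq_ker hext
  exact nth_syzygy_of_finite_length_mem_ext_closure_of_nth_syzygy_residue_field_general
    R M hM n K Kk hK hKk (· ∈ S) hKkS
end
end

section
/- Let R be a commutative Noetherian local ring and X a finitely generated R-module. Then the nonfree locus of X equals the support of Ext^1_R(X, ΩX), where ΩX is the first syzygy of X in a minimal free resolution. In particular, the nonfree locus of X is a Zariski-closed subset of Spec R. -/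
open CategoryTheory IsLocalRing

noncomputable section

variable (R : Type) [CommRing R] [IsLocalRing R]

/-- The nonfree locus of a module: the set of primes `p` such that `M_p` is
not a free `R_p`-module. -/
def nonfreeLocus (M : Type) [AddCommGroup M] [Module R M] :
    Set (PrimeSpectrum R) :=
  { p | ¬ Module.Free (Localization.AtPrime p.asIdeal)
      (LocalizedModule p.asIdeal.primeCompl M) }

/-!
Let `0 ⟶ K ⟶ F ⟶ X ⟶ 0` be exact with `F` projective. Splicing a resolution of `K` with `F` resolves
`X`, and shows that `Ext¹(X, K)` is the cokernel of the restriction `Hom(F, K) ⟶ Hom(K, K)`. Hence a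
scalar `r` annihilates `Ext¹(X, K)` iff it annihilates the class of the identity of `K`, i.e. iff
`r • 𝟙 K` extends to `F`, which happens iff `r • 𝟙 X` lifts to `F`. A prime `p` is outside the
support of `Ext¹(X, K)` iff this holds for some `r ∉ p`, and clearing denominators that says that
`Fₚ ⟶ Xₚ` splits, i.e. that `Xₚ` is projective, hence free over the local ring `Aₚ`.
-/

universe u v w

section MultiplesOfTheIdentity

variable {C : Type u} [Category.{v} C] [Abelian C] {k : Type w} [Ring k] [Linear k C]

theorem exists_comp_eq_smul_id_iff_of_shortExact {S : ShortComplex C} (hS : S.ShortExact) (r : k) :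
    (∃ v : S.X₂ ⟶ S.X₁, S.f ≫ v = r • 𝟙 S.X₁) ↔ ∃ s : S.X₃ ⟶ S.X₂, s ≫ S.g = r • 𝟙 S.X₃ := by
  have := hS.mono_f
  have := hS.epi_g
  constructor
  · rintro ⟨v, hv⟩
    obtain ⟨s, hs⟩ := hS.exact.desc' (r • 𝟙 S.X₂ - v ≫ S.f) (by simp [reassoc_of% hv])
    exact ⟨s, by simp [← cancel_epi S.g, reassoc_of% hs]⟩
  · rintro ⟨s, hs⟩
    obtain ⟨v, hv⟩ := hS.exact.lift' (r • 𝟙 S.X₂ - S.g ≫ s) (by simp [hs])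
    exact ⟨v, by simp [← cancel_mono S.f, hv]⟩

end MultiplesOfTheIdentity

section ProjectiveResolutions

variable {C : Type u} [Category.{v} C] [Abelian C]

/-- An augmented exact complex of projective objects `⋯ ⟶ K₁ ⟶ K₀ ⟶ Z ⟶ 0`, as a
`ProjectiveResolution` of `Z`. It allows exactness to be checked degree by degree instead of
through a quasi-isomorphism. -/
def projectiveResolutionOfExact (K : ChainComplex C ℕ) (hK : ∀ n, Projective (K.X n)) {Z : C}
    (ε : K.X 0 ⟶ Z) (hε : Epi ε) (w : K.d 1 0 ≫ ε = 0) (h₀ : (ShortComplex.mk _ _ w).Exact)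
    (h : ∀ n, K.ExactAt (n + 1)) : ProjectiveResolution Z where
  complex := K
  projective := hK
  π := (ChainComplex.toSingle₀Equiv _ _).symm ⟨ε, w⟩
  quasiIso := ⟨fun n ↦ by
    cases n with
    | zero =>
      rw [ChainComplex.quasiIsoAt₀_iff,
        ShortComplex.quasiIso_iff_of_zeros' _ (K.shape 0 0 (by simp)) rfl rfl]
      refine (ShortComplex.exact_and_epi_g_iff_of_iso (S₂ := ShortComplex.mk _ _ w) ?_).2
        ⟨h₀, hε⟩
      exact ShortComplex.isoMk (Iso.refl _) (Iso.refl _) (Iso.refl _)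
        (by simp [HomologicalComplex.shortComplexFunctor'])
        (by simp [HomologicalComplex.shortComplexFunctor'])
    | succ n =>
      rw [quasiIsoAt_iff_exactAt' _ _ (ChainComplex.exactAt_succ_single_obj _ _)]
      exact h n⟩

theorem exactAt_augment_succ {K : ChainComplex C ℕ} {Z : C} {f : K.X 0 ⟶ Z}
    {w : K.d 1 0 ≫ f = 0} (h₀ : (ShortComplex.mk _ _ w).Exact) (h : ∀ n, K.ExactAt (n + 1))
    (n : ℕ) : (K.augment f w).ExactAt (n + 1) := by
  rw [HomologicalComplex.exactAt_iff' _ (n + 2) (n + 1) n (by simp) (by simp)]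
  cases n with
  | zero => exact h₀
  | succ n => exact (K.exactAt_iff' (n + 2) (n + 1) n (by simp) (by simp)).1 (h n)

end ProjectiveResolutions

section ExtOne

variable {C : Type u} [Category.{v} C] [Abelian C]

/-- The Yoneda splice `⋯ ⟶ Q₁ ⟶ Q₀ ⟶ S.X₂ ⟶ S.X₃` of a projective resolution `Q` of `S.X₁` with a
short exact sequence `S` whose middle term is projective, with `S.X₂` in degree `0` and `Qₙ` in
degree `n + 1`. It computes `Ext¹` out of `S.X₃` in terms of morphisms out of `S.X₁` and `S.X₂`. -/
def splicedProjectiveResolution {S : ShortComplex C} (hS : S.ShortExact) [Projective S.X₂]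
    (Q : ProjectiveResolution S.X₁) : ProjectiveResolution S.X₃ :=
  let ε : Q.complex.X 0 ⟶ S.X₁ := Q.π.f 0
  have : Epi ε := inferInstanceAs (Epi (Q.π.f 0))
  have : Mono S.f := hS.mono_f
  have hε : Q.complex.d 1 0 ≫ ε = 0 := Q.complex_d_comp_π_f_zero
  have w : Q.complex.d 1 0 ≫ ε ≫ S.f = 0 := by simp [reassoc_of% hε]
  have hQ : (ShortComplex.mk _ _ w).Exact :=
    let φ : ShortComplex.mk _ _ hε ⟶ ShortComplex.mk _ _ w := { τ₁ := 𝟙 _, τ₂ := 𝟙 _, τ₃ := S.f }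
    (ShortComplex.exact_iff_of_epi_of_isIso_of_mono φ).1 Q.exact₀
  have w' : (ε ≫ S.f) ≫ S.g = 0 := by simp
  have hSε : (ShortComplex.mk _ _ w').Exact :=
    let φ : ShortComplex.mk _ _ w' ⟶ S := { τ₁ := ε, τ₂ := 𝟙 _, τ₃ := 𝟙 _ }
    (ShortComplex.exact_iff_of_epi_of_isIso_of_mono φ).2 hS.exact
  projectiveResolutionOfExact (Q.complex.augment (ε ≫ S.f) w)
    (fun n ↦ n.casesOn ‹Projective S.X₂› Q.projective) S.g hS.epi_g w' hSε
    (exactAt_augment_succ hQ Q.complex_exactAt_succ)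

theorem exists_exact_surjective_homology {k : Type w} [Ring k] (T : ShortComplex (ModuleCat.{v} k))
    {M : Type v} [AddCommGroup M] [Module k M] {φ : T.X₁ →ₗ[k] M} {j : M →ₗ[k] T.X₂}
    (hj : Function.Injective j) (hjg : Function.Exact j T.g.hom) (hφ : ∀ x, j (φ x) = T.f x) :
    ∃ δ : M →ₗ[k] T.homology, Function.Exact φ δ ∧ Function.Surjective δ := by
  let e : M ≃ₗ[k] LinearMap.ker T.g.hom :=
    (LinearEquiv.ofInjective j hj).trans (LinearEquiv.ofEq _ _ hjg.linearMap_ker_eq.symm)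
  let q := (LinearMap.range T.moduleCatToCycles).mkQ
  let h := T.moduleCatHomologyIso.toLinearEquiv.symm
  refine ⟨h.toLinearMap ∘ₗ q ∘ₗ e.toLinearMap, fun m ↦ ?_,
    h.surjective.comp ((Submodule.mkQ_surjective _).comp e.surjective)⟩
  calc h (q (e m)) = 0 ↔ q (e m) = 0 := h.map_eq_zero_iff
    _ ↔ ∃ x, T.moduleCatToCycles x = e m := Submodule.Quotient.mk_eq_zero _
    _ ↔ ∃ x, T.f x = j m := exists_congr fun x ↦ Subtype.ext_iff
    _ ↔ ∃ x, φ x = m := by simp only [← hφ, hj.eq_iff]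

variable {k : Type w} [Ring k] [Linear k C]

theorem exact_leftComp {S : ShortComplex C} (hS : S.Exact) [Epi S.g] (Y : C) :
    Function.Exact (Linear.leftComp k Y S.g) (Linear.leftComp k Y S.f) := by
  refine fun c ↦ ⟨fun hc ↦ ⟨hS.desc c hc, hS.g_desc c hc⟩, ?_⟩
  rintro ⟨a, rfl⟩
  simp

theorem exists_exact_leftComp_surjective_ext_one [EnoughProjectives C] {S : ShortComplex C}
    (hS : S.ShortExact) [Projective S.X₂] (Y : C) :
    ∃ δ : (S.X₁ ⟶ Y) →ₗ[k] ((Ext k C 1).obj (Opposite.op S.X₃)).obj Y,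
      Function.Exact (Linear.leftComp k Y S.f) δ ∧ Function.Surjective δ := by
  let Q := projectiveResolution S.X₁
  let P := splicedProjectiveResolution hS Q
  let ε : Q.complex.X 0 ⟶ S.X₁ := Q.π.f 0
  have : Epi ε := inferInstanceAs (Epi (Q.π.f 0))
  let T := (P.complex.linearYonedaObj k Y).sc' 0 1 2
  let e : ((Ext k C 1).obj (Opposite.op S.X₃)).obj Y ≃ₗ[k] T.homology :=
    (P.isoExt 1 Y ≪≫
      HomologicalComplex.homologyIsoSc' _ 0 1 2 (by simp) (by simp)).toLinearEquiv
  obtain ⟨δ, hφδ, hδ⟩ := exists_exact_surjective_homology T (φ := Linear.leftComp k Y S.f)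
    (j := Linear.leftComp k Y ε) (fun _ _ ↦ (cancel_epi ε).1) (exact_leftComp Q.exact₀ Y)
    fun u ↦ (Category.assoc ε S.f u).symm
  exact ⟨e.symm.toLinearMap ∘ₗ δ, fun a ↦ e.symm.map_eq_zero_iff.trans (hφδ a),
    e.symm.surjective.comp hδ⟩

end ExtOne

section Support

variable {C : Type u} [Category.{v} C] [Abelian C] [EnoughProjectives C]
  {A : Type w} [CommRing A] [Linear A C]

theorem notMem_support_ext_one_iff {S : ShortComplex C} (hS : S.ShortExact) [Projective S.X₂]
    (p : PrimeSpectrum A) :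
    p ∉ Module.support A (((Ext A C 1).obj (Opposite.op S.X₃)).obj S.X₁) ↔
      ∃ r ∉ p.asIdeal, ∃ s : S.X₃ ⟶ S.X₂, s ≫ S.g = r • 𝟙 S.X₃ := by
  obtain ⟨δ, hexact, hδ⟩ := exists_exact_leftComp_surjective_ext_one (k := A) hS S.X₁
  have kills_iff (r : A) (u : S.X₁ ⟶ S.X₁) : r • δ u = 0 ↔ ∃ v, S.f ≫ v = r • u := by
    rw [← map_smul]
    exact hexact (r • u)
  simp_rw [← exists_comp_eq_smul_id_iff_of_shortExact hS, ← kills_iff,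
    Module.notMem_support_iff']
  refine ⟨fun h ↦ h (δ (𝟙 S.X₁)), fun ⟨r, hr, h⟩ x ↦ ⟨r, hr, ?_⟩⟩
  obtain ⟨u, rfl⟩ := hδ x
  obtain ⟨v, hv⟩ := (kills_iff r _).1 h
  exact (kills_iff r u).2 ⟨v ≫ u, by simp [reassoc_of% hv]⟩

end Support

section Localization

theorem localizedModule_map_comp {A : Type*} [CommSemiring A] (S : Submonoid A) {L M N : Type*}
    [AddCommMonoid L] [AddCommMonoid M] [AddCommMonoid N] [Module A L] [Module A M] [Module A N]
    (g : M →ₗ[A] N) (f : L →ₗ[A] M) :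
    LocalizedModule.map S (g ∘ₗ f) = LocalizedModule.map S g ∘ₗ LocalizedModule.map S f :=
  LinearMap.ext fun x ↦ LinearMap.congr_fun
    (IsLocalizedModule.map_comp' S (LocalizedModule.mkLinearMap S L)
      (LocalizedModule.mkLinearMap S M) (LocalizedModule.mkLinearMap S N) f g) x

variable {A : Type u} [CommRing A] {X : Type v} [AddCommGroup X] [Module A X]
  {F : Type w} [AddCommGroup F] [Module A F]

theorem exists_localizedModule_rightInverse_iff [Module.FinitePresentation A X] (S : Submonoid A)
    (f : F →ₗ[A] X) :
    (∃ σ : LocalizedModule S X →ₗ[Localization S] LocalizedModule S F,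
        LocalizedModule.map S f ∘ₗ σ = LinearMap.id) ↔
      ∃ r ∈ S, ∃ s : X →ₗ[A] F, f ∘ₗ s = r • LinearMap.id := by
  have map_smul_id (r : A) : LocalizedModule.map S (r • LinearMap.id : X →ₗ[A] X) =
      r • LinearMap.id := by
    rw [map_smul, LocalizedModule.map_id]
  constructor
  · rintro ⟨σ, hσ⟩
    obtain ⟨⟨s, t⟩, hs : t.1 • σ = LocalizedModule.map S s⟩ :=
      IsLocalizedModule.surj S (LocalizedModule.map S) σ
    have hfs : LocalizedModule.map S (f ∘ₗ s) = LocalizedModule.map S (t.1 • LinearMap.id) := by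
      rw [localizedModule_map_comp, map_smul_id, ← hs, LinearMap.comp_smul, hσ]
    obtain ⟨c, hc⟩ := IsLocalizedModule.exists_of_eq (S := S) hfs
    exact ⟨c * t, mul_mem c.2 t.2, c • s, by rw [LinearMap.comp_smul, hc, mul_smul]; rfl⟩
  · rintro ⟨r, hr, s, hs⟩
    refine ⟨IsLocalization.mk' (Localization S) 1 ⟨r, hr⟩ • LocalizedModule.map S s, ?_⟩
    rw [LinearMap.comp_smul, ← localizedModule_map_comp, hs, map_smul_id,
      ← algebraMap_smul (Localization S) r, ← mul_smul,
      IsLocalization.mk'_spec (Localization S) 1 ⟨r, hr⟩, map_one, one_smul]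

theorem mem_freeLocus_iff_exists_comp_eq_smul_id [Module.FinitePresentation A X]
    [Module.Projective A F] {f : F →ₗ[A] X} (hf : Function.Surjective f) (p : PrimeSpectrum A) :
    p ∈ Module.freeLocus A X ↔
      ∃ r ∉ p.asIdeal, ∃ s : X →ₗ[A] F, f ∘ₗ s = r • LinearMap.id := by
  let S := p.asIdeal.primeCompl
  have : Module.Projective (Localization S) (LocalizedModule S F) :=
    Module.projective_of_isLocalizedModule S (LocalizedModule.mkLinearMap S F)
  refine Iff.trans ⟨fun hfree ↦ ?_, fun ⟨σ, hσ⟩ ↦ ?_⟩ (exists_localizedModule_rightInverse_iff S f)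
  · have : Module.Free (Localization S) (LocalizedModule S X) := hfree
    exact Module.projective_lifting_property _ LinearMap.id (LocalizedModule.map_surjective S f hf)
  · have : Module.Projective (Localization S) (LocalizedModule S X) := .of_split σ _ hσ
    exact Module.free_of_flat_of_isLocalRing (R := Localization.AtPrime p.asIdeal)

end Localization

theorem nonfreeLocus_eq_support_ext_and_isClosed_general {A : Type u} [CommRing A] [Small.{v} A]
    {S : ShortComplex (ModuleCat.{v} A)} (hS : S.ShortExact) [Projective S.X₂]
    [Module.FinitePresentation A S.X₃] :
    (Module.freeLocus A S.X₃)ᶜ =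
        Module.support A (((Ext A (ModuleCat.{v} A) 1).obj (Opposite.op S.X₃)).obj S.X₁) ∧
      IsClosed (Module.freeLocus A S.X₃)ᶜ := by
  have : Module.Projective A S.X₂ := (IsProjective.iff_projective _).2 ‹_›
  refine ⟨Set.ext fun p ↦ not_iff_comm.1 ?_, Module.isOpen_freeLocus.isClosed_compl⟩
  rw [notMem_support_ext_one_iff hS,
    mem_freeLocus_iff_exists_comp_eq_smul_id hS.moduleCat_surjective_g]
  exact exists_congr fun r ↦ and_congr_right fun _ ↦
    ModuleCat.homEquiv.exists_congr fun s ↦ ModuleCat.hom_ext_iff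

theorem IsSyzygyOf.exists_shortExact {A : Type} [CommRing A] [IsLocalRing A]
    {K M : ModuleCat.{0} A} (h : IsSyzygyOf A K M) :
    ∃ (F : ModuleCat.{0} A) (f : K ⟶ F) (g : F ⟶ M) (w : f ≫ g = 0),
      Projective F ∧ (ShortComplex.mk f g w).ShortExact := by
  obtain ⟨n, g, hg, -, ⟨e⟩⟩ := h
  have hexact : Function.Exact ((LinearMap.ker g).subtype ∘ₗ e.toLinearMap) g :=
    LinearEquiv.precomp_exact_iff_exact.2 g.exact_subtype_ker_map
  exact ⟨ModuleCat.of A (Fin n → A), ModuleCat.ofHom ((LinearMap.ker g).subtype ∘ₗ e.toLinearMap),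
    ModuleCat.ofHom g, ModuleCat.hom_ext hexact.linearMap_comp_eq_zero,
    ModuleCat.projective_of_free (Pi.basisFun A (Fin n)),
    ModuleCat.shortComplex_shortExact _ hexact
      (Subtype.val_injective.comp e.injective) hg⟩

/-- the nonfree locus of `X` equals the support of
`Ext¹(X, ΩX)`; in particular it is Zariski-closed. -/
theorem nonfreeLocus_eq_support_ext_and_isClosed
    [IsNoetherianRing R]
    (X : Type) [AddCommGroup X] [Module R X] [Module.Finite R X]
    (ΩX : ModuleCat.{0} R) (hΩ : IsSyzygyOf R ΩX (ModuleCat.of R X)) :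
    nonfreeLocus R X =
      Module.support R
        ↥(((Ext R (ModuleCat.{0} R) 1).obj
            (Opposite.op (ModuleCat.of R X))).obj ΩX) ∧
    IsClosed (nonfreeLocus R X) := by
  obtain ⟨F, f, g, w, hF, hS⟩ := hΩ.exists_shortExact
  have := Module.finitePresentation_of_finite R X
  exact nonfreeLocus_eq_support_ext_and_isClosed_general hS
end
end
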